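/- If there exists a Nash equilibrium in a quantitative multiplayer reachability game G, then there exists a finite-memory Nash equilibrium of the same type in G. -/

import Mathlib

/-- A quantitative multiplayer reachability game: a finite directed graph whose
vertex set is partitioned among the players (via `owner`), with an initial vertex `v0`,
an edge relation `E` such that every vertex has an outgoing edge, and a goal set
`goal i` for each player `i`. -/
structure ReachGame (P : Type) (V : Type) where
  owner : V → P
  v0 : V
  E : V → V → Prop
  total : ∀ v : V, ∃ w : V, E v w
  goal : P → Set V

namespace ReachGame

variable {P V : Type} [DecidableEq P] (G : ReachGame P V)

/-- The last vertex of a history (with default `v0`). -/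
def lastV (h : List V) : V := h.getLastD G.v0

/-- A history: a nonempty finite path in the graph starting at `v0`. -/
def IsHistory (h : List V) : Prop :=
  h ≠ [] ∧ h.head? = some G.v0 ∧ List.Chain' G.E h

/-- A play: an infinite path starting at `v0`. -/
def IsPlay (ρ : ℕ → V) : Prop :=
  ρ 0 = G.v0 ∧ ∀ k : ℕ, G.E (ρ k) (ρ (k + 1))

/-- `σ` is a (total encoding of a) strategy of player `i`: on every history ending in
a vertex owned by `i` it chooses a successor along an edge. -/
def IsStrategy (i : P) (σ : List V → V) : Prop :=
  ∀ h : List V, G.IsHistory h → G.owner (G.lastV h) = i → G.E (G.lastV h) (σ h)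

/-- A strategy profile: one strategy per player. -/
def IsProfile (prof : P → List V → V) : Prop :=
  ∀ i : P, G.IsStrategy i (prof i)

/-- The history of length `n` (i.e. with `n` edges) obtained by letting the players
follow the profile `prof` from `v0`. -/
def outHist (prof : P → List V → V) : ℕ → List V
  | 0 => [G.v0]
  | n + 1 => outHist prof n ++ [prof (G.owner (G.lastV (outHist prof n))) (outHist prof n)]

/-- The outcome play of the strategy profile `prof`. -/
def outcome (prof : P → List V → V) (n : ℕ) : V :=
  G.lastV (G.outHist prof n)

/-- The cost of player `i` for the play `ρ`: the least `l` with `ρ l ∈ goal i`,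
and `⊤` (`+∞`) if there is no such `l`. -/
noncomputable def cost (i : P) (ρ : ℕ → V) : ℕ∞ :=
  sInf {n : ℕ∞ | ∃ l : ℕ, n = (l : ℕ∞) ∧ ρ l ∈ G.goal i}

/-- Nash equilibrium: no player can strictly decrease his cost by a unilateral
deviation. -/
def IsNash (prof : P → List V → V) : Prop :=
  ∀ (j : P) (σ' : List V → V), G.IsStrategy j σ' →
    G.cost j (G.outcome prof) ≤ G.cost j (G.outcome (Function.update prof j σ'))

/-- `h ≈_σ h'` : the strategy `σ` of player `i` behaves the same after `h` and `h'`,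
i.e. `σ (h ++ δ) = σ (h' ++ δ)` for every suffix `δ` making both `h ++ δ` and
`h' ++ δ` histories ending in a vertex of player `i`. -/
def MemEq (i : P) (σ : List V → V) (h h' : List V) : Prop :=
  ∀ δ : List V,
    G.IsHistory (h ++ δ) → G.owner (G.lastV (h ++ δ)) = i →
    G.IsHistory (h' ++ δ) → G.owner (G.lastV (h' ++ δ)) = i →
    σ (h ++ δ) = σ (h' ++ δ)

/-- A strategy of player `i` is finite-memory if the relation `≈_σ` has finitely many
equivalence classes on histories, i.e. there is a finite set of histories meeting
every class. -/
def FiniteMemory (i : P) (σ : List V → V) : Prop :=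
  ∃ S : Finset (List V), ∀ h : List V, G.IsHistory h →
    ∃ h' ∈ S, G.IsHistory h' ∧ G.MemEq i σ h h'

/-- A profile is finite-memory if each of its strategies is. -/
def FiniteMemoryProfile (prof : P → List V → V) : Prop :=
  ∀ i : P, G.FiniteMemory i (prof i)

/-- `Visit h`: the set of players whose goal set is visited by the finite path `h`. -/
def visitL (h : List V) : Set P := {i : P | ∃ v ∈ h, v ∈ G.goal i}

/-- The type of a strategy profile: the set of players whose goal set is visited by
the outcome. -/
def typeOf (prof : P → List V → V) : Set P :=
  {i : P | ∃ l : ℕ, G.outcome prof l ∈ G.goal i}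

/-! ### The truncated game `G^d` -/

/-- A strategy of player `i` in the truncated game `G^d` : it chooses a successor on
every history with less than `d` edges (list length `≤ d`) ending in a vertex of `i`. -/
def IsStrategyTrunc (d : ℕ) (i : P) (σ : List V → V) : Prop :=
  ∀ h : List V, G.IsHistory h → h.length ≤ d → G.owner (G.lastV h) = i →
    G.E (G.lastV h) (σ h)

/-- A strategy profile of the truncated game `G^d`. -/
def IsProfileTrunc (d : ℕ) (prof : P → List V → V) : Prop :=
  ∀ i : P, G.IsStrategyTrunc d i (prof i)

/-- The cost of player `i` for a finite play `h` (a list of vertices): the least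
position of `h` lying in `goal i`, and `⊤` if `goal i` is not visited. -/
noncomputable def costList (i : P) (h : List V) : ℕ∞ :=
  sInf {n : ℕ∞ | ∃ l : ℕ, n = (l : ℕ∞) ∧ l < h.length ∧ h.getD l G.v0 ∈ G.goal i}

/-- Nash equilibrium of the truncated game `G^d` (whose plays are the histories with
exactly `d` edges). -/
def IsNashTrunc (d : ℕ) (prof : P → List V → V) : Prop :=
  ∀ (j : P) (σ' : List V → V), G.IsStrategyTrunc d j σ' →
    G.costList j (G.outHist prof d) ≤
      G.costList j (G.outHist (Function.update prof j σ') d)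

/-- The type of a strategy profile of the truncated game `G^d`. -/
def typeOfTrunc (d : ℕ) (prof : P → List V → V) : Set P :=
  G.visitL (G.outHist prof d)

end ReachGame

namespace ReachGame

section Helpers

variable {P V : Type} (G : ReachGame P V)

/-- `Attr j m v`: player `j` can force a visit to his goal set from `v` within `m` steps. -/
def Attr (j : P) : ℕ → V → Prop
  | 0, v => v ∈ G.goal j
  | m + 1, v => v ∈ G.goal j ∨ (G.owner v = j ∧ ∃ w, G.E v w ∧ Attr j m w) ∨
      (G.owner v ≠ j ∧ ∀ w, G.E v w → Attr j m w)

theorem attr_goal (j : P) (m : ℕ) (v : V) (h : v ∈ G.goal j) : G.Attr j m v := by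
  cases m with
  | zero => exact h
  | succ m => exact Or.inl h

theorem attr_succ (j : P) (m : ℕ) : ∀ v, G.Attr j m v → G.Attr j (m + 1) v := by
  induction m with
  | zero => intro v h; exact Or.inl h
  | succ m ih =>
    intro v h
    rcases h with h | ⟨ho, w, hw, hA⟩ | ⟨ho, hA⟩
    · exact Or.inl h
    · exact Or.inr (Or.inl ⟨ho, w, hw, ih w hA⟩)
    · exact Or.inr (Or.inr ⟨ho, fun w hw => ih w (hA w hw)⟩)

theorem attr_mono (j : P) {m m' : ℕ} (hm : m ≤ m') (v : V) (h : G.Attr j m v) :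
    G.Attr j m' v := by
  induction hm with
  | refl => exact h
  | step _ ih => exact G.attr_succ j _ v ih

theorem exists_pun [Finite V] (j : P) (v : V) :
    ∃ w, G.E v w ∧ (G.owner v ≠ j → ∀ m, G.Attr j m w → G.Attr j (m + 1) v) := by
  by_cases ho : G.owner v = j
  · obtain ⟨w, hw⟩ := G.total v
    exact ⟨w, hw, fun h => absurd ho h⟩
  by_contra hcon
  push Not at hcon
  have h2 : ∀ w, ∃ m, G.E v w → G.Attr j m w ∧ ¬ G.Attr j (m + 1) v := by
    intro w
    by_cases hw : G.E v w
    · obtain ⟨_, m, h1, h2⟩ := hcon w hw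
      exact ⟨m, fun _ => ⟨h1, h2⟩⟩
    · exact ⟨0, fun h => absurd h hw⟩
  choose f hf using h2
  obtain ⟨w, hw, hmax⟩ := Set.exists_max_image {w | G.E v w} f (Set.toFinite _) (G.total v)
  refine (hf w hw).2 (Or.inr (Or.inr ⟨ho, fun u hu => ?_⟩))
  exact G.attr_mono j (hmax u hu) u (hf u hu).1

theorem exists_att (j : P) (m : ℕ) (v : V) :
    ∃ w, G.E v w ∧ (G.owner v = j → v ∉ G.goal j → G.Attr j (m + 1) v → G.Attr j m w) := by
  by_cases h : G.owner v = j ∧ v ∉ G.goal j ∧ G.Attr j (m + 1) v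
  · obtain ⟨ho, hg, h | ⟨_, w, hw, hA⟩ | ⟨ho', _⟩⟩ := h
    · exact absurd h hg
    · exact ⟨w, hw, fun _ _ _ => hA⟩
    · exact absurd ho ho'
  · obtain ⟨w, hw⟩ := G.total v
    exact ⟨w, hw, fun h1 h2 h3 => absurd ⟨h1, h2, h3⟩ h⟩

theorem cost_le (j : P) (ρ : ℕ → V) (l : ℕ) (h : ρ l ∈ G.goal j) : G.cost j ρ ≤ l :=
  sInf_le ⟨l, rfl, h⟩

theorem le_cost (j : P) (ρ : ℕ → V) (c : ℕ∞) (h : ∀ l : ℕ, ρ l ∈ G.goal j → c ≤ l) :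
    c ≤ G.cost j ρ := by
  refine le_sInf ?_
  rintro _ ⟨l, rfl, hl⟩
  exact h l hl

theorem lastV_append (h : List V) (w : V) : G.lastV (h ++ [w]) = w := by
  simp [lastV]

theorem isHistory_append {h : List V} {w : V} (hh : G.IsHistory h) (hw : G.E (G.lastV h) w) :
    G.IsHistory (h ++ [w]) := by
  obtain ⟨h1, h2, h3⟩ := hh
  refine ⟨by simp, ?_, ?_⟩
  · cases h with
    | nil => exact absurd rfl h1
    | cons a t => simpa using h2
  · refine List.isChain_append.2 ⟨h3, by simp, ?_⟩
    intro x hx y hy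
    simp at hy
    subst hy
    have : G.lastV h = x := by
      unfold lastV
      rw [List.getLastD_eq_getLast?]
      rw [Option.mem_def.1 hx]; rfl
    rwa [← this]

theorem isHistory_outHist [DecidableEq P] (prof : P → List V → V) (hp : G.IsProfile prof) (n : ℕ) :
    G.IsHistory (G.outHist prof n) := by
  induction n with
  | zero => exact ⟨by simp [outHist], by simp [outHist], by simp [outHist, List.Chain']⟩
  | succ n ih => exact G.isHistory_append ih (hp _ _ ih rfl)

theorem length_outHist (prof : P → List V → V) (n : ℕ) :
    (G.outHist prof n).length = n + 1 := by
  induction n with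
  | zero => rfl
  | succ n ih => simp [outHist, ih]

theorem outcome_succ (prof : P → List V → V) (n : ℕ) :
    G.outcome prof (n + 1) = prof (G.owner (G.outcome prof n)) (G.outHist prof n) := by
  unfold outcome
  rw [outHist, lastV_append]

theorem outcome_edge (prof : P → List V → V) (hp : G.IsProfile prof) (n : ℕ) :
    G.E (G.outcome prof n) (G.outcome prof (n + 1)) := by
  classical
  rw [outcome_succ]
  exact hp _ _ (G.isHistory_outHist prof hp n) rfl

theorem isProfile_update [DecidableEq P] (prof : P → List V → V) (hp : G.IsProfile prof) (j : P)
    (σ : List V → V) (hσ : G.IsStrategy j σ) : G.IsProfile (Function.update prof j σ) := by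
  intro i
  by_cases h : i = j
  · subst h; simpa using hσ
  · simpa [Function.update_of_ne h] using hp i

/-- In a Nash equilibrium, at each point of the outcome, nobody can force an early visit. -/
theorem nash_attr [DecidableEq P] (prof : P → List V → V) (hp : G.IsProfile prof)
    (hn : G.IsNash prof) (j : P) (k m : ℕ) (hA : G.Attr j m (G.outcome prof k)) :
    G.cost j (G.outcome prof) ≤ ((k + m : ℕ) : ℕ∞) := by
  choose att hE hatt using G.exists_att j
  let σ : List V → V := fun h =>
    if h.length ≤ k then prof j h else att (k + m - h.length) (G.lastV h)
  have hσ : G.IsStrategy j σ := by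
    intro h hh ho
    by_cases hl : h.length ≤ k
    · simp only [σ, if_pos hl]; exact hp j h hh ho
    · simp only [σ, if_neg hl]; exact hE _ _
  have hp' := G.isProfile_update prof hp j σ hσ
  refine (hn j σ hσ).trans ?_
  set prof' := Function.update prof j σ with hprof'
  have hsame : ∀ n ≤ k, G.outHist prof' n = G.outHist prof n := by
    intro n
    induction n with
    | zero => intro _; rfl
    | succ n ih =>
      intro hnk
      have ih := ih (by omega)
      simp only [outHist, ih]
      congr 2
      by_cases ho : G.owner (G.lastV (G.outHist prof n)) = j
      · rw [ho, hprof', Function.update_self]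
        simp only [σ]
        rw [if_pos (by rw [length_outHist]; omega)]
      · rw [hprof', Function.update_of_ne ho]
  have key : ∀ n n', n + n' = m →
      (∃ l ≤ k + m, G.outcome prof' l ∈ G.goal j) ∨ G.Attr j n' (G.outcome prof' (k + n)) := by
    intro n
    induction n with
    | zero =>
      intro n' hn'
      right
      have : n' = m := by omega
      subst this
      simpa [outcome, hsame k le_rfl] using hA
    | succ n ih =>
      intro n' hn'
      rcases ih (n' + 1) (by omega) with h | h
      · exact Or.inl h
      by_cases hg : G.outcome prof' (k + n) ∈ G.goal j
      · exact Or.inl ⟨k + n, by omega, hg⟩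
      right
      by_cases ho : G.owner (G.outcome prof' (k + n)) = j
      · have h3 := hatt n' _ ho hg h
        rw [← add_assoc, outcome_succ, ho, hprof', Function.update_self, ← hprof']
        simp only [σ]
        rw [length_outHist, if_neg (by omega)]
        have : k + m - (k + n + 1) = n' := by omega
        rw [this]
        exact h3
      · rcases h with h | ⟨h, _⟩ | ⟨_, h⟩
        · exact absurd h hg
        · exact absurd h ho
        · exact h _ (G.outcome_edge prof' hp' _)
  rcases key m 0 (by omega) with ⟨l, hl, hg⟩ | h
  · exact (G.cost_le j _ l hg).trans (by exact_mod_cast hl)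
  · exact G.cost_le j _ _ h

/-- Finite memory from a finite-valued invariant determining the future behaviour. -/
theorem finiteMemory_of_map [DecidableEq P] (i : P) (σ : List V → V) {K : Type} (f : List V → K)
    (hf : (f '' {h | G.IsHistory h}).Finite)
    (h : ∀ h h', G.IsHistory h → G.IsHistory h' → f h = f h' → G.MemEq i σ h h') :
    G.FiniteMemory i σ := by
  classical
  obtain ⟨T, hT, hi⟩ := Set.exists_subset_bijOn {h | G.IsHistory h} f
  have hfin : T.Finite := Set.Finite.of_finite_image (by rw [hi.image_eq]; exact hf) hi.injOn
  refine ⟨hfin.toFinset, fun x hx => ?_⟩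
  have : f x ∈ f '' T := by rw [hi.image_eq]; exact ⟨x, hx, rfl⟩
  obtain ⟨y, hy, hxy⟩ := this
  exact ⟨y, by simpa using hy, hT hy, h x y hx (hT hy) hxy.symm⟩

/-- Successor index in the lasso. -/
def nxt (a b n : ℕ) : ℕ := if n + 1 = b then a else n + 1

open Classical in
/-- Memory update. -/
noncomputable def upd (ρ : ℕ → V) (a b : ℕ) : ℕ ⊕ P → V → ℕ ⊕ P
  | Sum.inl n, v => if v = ρ (nxt a b n) then Sum.inl (nxt a b n) else Sum.inr (G.owner (ρ n))
  | Sum.inr j, _ => Sum.inr j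

/-- Memory state after a history. -/
noncomputable def st (ρ : ℕ → V) (a b : ℕ) (h : List V) : ℕ ⊕ P :=
  h.tail.foldl (G.upd ρ a b) (Sum.inl 0)

/-- The move selected by the memory state. -/
def out (ρ : ℕ → V) (a b : ℕ) (pun : P → V → V) : ℕ ⊕ P → V → V
  | Sum.inl n, _ => ρ (nxt a b n)
  | Sum.inr j, v => pun j v

/-- The common strategy. -/
noncomputable def strat (ρ : ℕ → V) (a b : ℕ) (pun : P → V → V) (h : List V) : V :=
  out ρ a b pun (G.st ρ a b h) (G.lastV h)

theorem st_append (ρ : ℕ → V) (a b : ℕ) (h δ : List V) (hh : h ≠ []) :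
    G.st ρ a b (h ++ δ) = δ.foldl (G.upd ρ a b) (G.st ρ a b h) := by
  unfold st
  rw [List.tail_append_of_ne_nil hh, List.foldl_append]

theorem st_inl (ρ : ℕ → V) (a b : ℕ) (hab : a < b) (h0 : ρ 0 = G.v0) (h : List V) :
    h ≠ [] → h.head? = some G.v0 → ∀ n, G.st ρ a b h = Sum.inl n → n < b ∧ G.lastV h = ρ n := by
  induction h using List.reverseRecOn with
  | nil => intro h; exact absurd rfl h
  | append_singleton h w ih =>
    intro _ hh n hn
    by_cases hnil : h = []
    · subst hnil
      simp [st] at hn hh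
      subst hn
      subst hh
      exact ⟨by omega, by rw [h0]; rfl⟩
    · have hh' : h.head? = some G.v0 := by
        cases h with
        | nil => exact absurd rfl hnil
        | cons x t => simpa using hh
      rw [G.st_append _ _ _ _ _ hnil] at hn
      rw [lastV_append]
      have ih := ih hnil hh'
      cases hs : G.st ρ a b h with
      | inr j => rw [hs] at hn; simp [upd] at hn
      | inl m =>
        obtain ⟨hm, _⟩ := ih m hs
        rw [hs] at hn
        simp only [List.foldl_cons, List.foldl_nil, upd] at hn
        split_ifs at hn with hw
        simp only [Sum.inl.injEq] at hn
        subst hn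
        refine ⟨?_, hw⟩
        unfold nxt
        split_ifs <;> omega

theorem nxt_edge (ρ : ℕ → V) (hρ : ∀ k, G.E (ρ k) (ρ (k + 1))) (a b : ℕ) (hab : ρ a = ρ b)
    (n : ℕ) : G.E (ρ n) (ρ (nxt a b n)) := by
  unfold nxt
  split_ifs with h
  · rw [hab, ← h]; exact hρ n
  · exact hρ n

theorem idx_le (a b : ℕ) (hab : a < b) (n : ℕ) : (nxt a b)^[n] 0 ≤ n := by
  induction n with
  | zero => simp
  | succ n ih =>
    rw [Function.iterate_succ_apply']
    unfold nxt at ih ⊢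
    split_ifs <;> omega

theorem idx_eq (a b : ℕ) (n : ℕ) (hn : n < b) : (nxt a b)^[n] 0 = n := by
  induction n with
  | zero => simp
  | succ n ih =>
    rw [Function.iterate_succ_apply', ih (by omega)]
    unfold nxt
    rw [if_neg (by omega)]

theorem st_outHist_succ (prof : P → List V → V) (ρ : ℕ → V) (a b : ℕ) (n : ℕ) :
    G.st ρ a b (G.outHist prof (n + 1)) =
      G.upd ρ a b (G.st ρ a b (G.outHist prof n)) (G.outcome prof (n + 1)) := by
  have hne : G.outHist prof n ≠ [] := by
    intro h
    have := G.length_outHist prof n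
    simp [h] at this
  rw [outcome_succ, outHist, st_append _ _ _ _ _ _ hne]
  rfl

end Helpers

end ReachGame

/-- If a quantitative multiplayer reachability game `G` has a Nash
equilibrium, then it has a finite-memory Nash equilibrium of the same type. -/
theorem finiteMemory_nash_same_type {P V : Type} [Fintype P] [DecidableEq P] [Fintype V]
    (G : ReachGame P V)
    (prof : P → List V → V) (hprof : G.IsProfile prof) (hnash : G.IsNash prof) :
    ∃ τ : P → List V → V,
      G.IsProfile τ ∧ G.FiniteMemoryProfile τ ∧ G.IsNash τ ∧
      G.typeOf τ = G.typeOf prof := by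
  classical
  set ρ := G.outcome prof with hρdef
  have h0 : ρ 0 = G.v0 := rfl
  have hρ : ∀ k, G.E (ρ k) (ρ (k + 1)) := G.outcome_edge prof hprof
  -- a bound for all the visits
  obtain ⟨N, hN⟩ : ∃ N, ∀ j : P, (∃ l, ρ l ∈ G.goal j) → ∃ l ≤ N, ρ l ∈ G.goal j ∧
      ∀ l', ρ l' ∈ G.goal j → l ≤ l' := by
    have h : ∀ j : P, ∃ l, (∃ l, ρ l ∈ G.goal j) → ρ l ∈ G.goal j ∧
        ∀ l', ρ l' ∈ G.goal j → l ≤ l' := by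
      intro j
      by_cases h : ∃ l, ρ l ∈ G.goal j
      · exact ⟨Nat.find h, fun _ => ⟨Nat.find_spec h, fun l' hl' => Nat.find_min' h hl'⟩⟩
      · exact ⟨0, fun h' => absurd h' h⟩
    choose f hf using h
    exact ⟨Finset.univ.sup f, fun j hj => ⟨f j, Finset.le_sup (Finset.mem_univ j), hf j hj⟩⟩
  obtain ⟨a, b, hNa, hab, hρab⟩ : ∃ a b, N ≤ a ∧ a < b ∧ ρ a = ρ b := by
    obtain ⟨x, y, hxy, he⟩ := Finite.exists_ne_map_eq_of_infinite (fun n : ℕ => ρ (N + n))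
    rcases lt_or_gt_of_ne hxy with h | h
    · exact ⟨N + x, N + y, by omega, by omega, he⟩
    · exact ⟨N + y, N + x, by omega, by omega, he.symm⟩
  choose pun hpunE hpun using G.exists_pun
  let s := G.strat ρ a b pun
  let τ : P → List V → V := fun _ => s
  have hτ : G.IsProfile τ := by
    intro i h hh _
    change G.E _ (ReachGame.out ρ a b pun (G.st ρ a b h) (G.lastV h))
    cases hs : G.st ρ a b h with
    | inr j => exact hpunE j _
    | inl n =>
      rw [(G.st_inl ρ a b hab h0 h hh.1 hh.2.1 n hs).2]
      exact G.nxt_edge ρ hρ a b hρab n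
  let π : ℕ → V := fun n => ρ ((ReachGame.nxt a b)^[n] 0)
  have hout : ∀ n, G.st ρ a b (G.outHist τ n) = Sum.inl ((ReachGame.nxt a b)^[n] 0) ∧
      G.outcome τ n = π n := by
    intro n
    induction n with
    | zero => exact ⟨rfl, rfl⟩
    | succ n ih =>
      have h1 : G.outcome τ (n + 1) = π (n + 1) := by
        rw [G.outcome_succ]
        change ReachGame.out ρ a b pun (G.st ρ a b _) _ = _
        rw [ih.1]
        simp only [ReachGame.out, π, Function.iterate_succ_apply']
      refine ⟨?_, h1⟩
      rw [G.st_outHist_succ, ih.1, h1]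
      simp only [ReachGame.upd, π, Function.iterate_succ_apply', if_true]
  have hπ : G.outcome τ = π := funext fun n => (hout n).2
  have hcost : ∀ j, G.cost j π ≤ G.cost j ρ := by
    intro j
    refine G.le_cost j ρ _ fun l hl => ?_
    obtain ⟨l₁, h1, h2, h3⟩ := hN j ⟨l, hl⟩
    have h4 : π l₁ ∈ G.goal j := by
      simp only [π]
      rw [ReachGame.idx_eq a b l₁ (by omega)]
      exact h2
    exact (G.cost_le j π l₁ h4).trans (by exact_mod_cast h3 l hl)
  have hgood : ∀ j n m, G.Attr j m (π n) → G.cost j π ≤ ((n + m : ℕ) : ℕ∞) := by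
    intro j n m hA
    refine (hcost j).trans ((G.nash_attr prof hprof hnash j _ m hA).trans ?_)
    have := ReachGame.idx_le a b hab n
    exact_mod_cast (by omega : (ReachGame.nxt a b)^[n] 0 + m ≤ n + m)
  refine ⟨τ, hτ, ?_, ?_, ?_⟩
  · intro i
    refine G.finiteMemory_of_map i s (fun h => (G.st ρ a b h, G.lastV h)) ?_ ?_
    · have hfin : ((Sum.inl '' Set.Iio b ∪ Set.range Sum.inr : Set (ℕ ⊕ P)) ×ˢ
          (Set.univ : Set V)).Finite :=
        (((Set.finite_Iio b).image _).union (Set.finite_range _)).prod Set.finite_univ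
      refine hfin.subset ?_
      rintro _ ⟨h, hh, rfl⟩
      refine ⟨?_, Set.mem_univ _⟩
      change G.st ρ a b h ∈ _
      cases hs : G.st ρ a b h with
      | inr j => exact Or.inr ⟨j, rfl⟩
      | inl n => exact Or.inl ⟨n, (G.st_inl ρ a b hab h0 h hh.1 hh.2.1 n hs).1, rfl⟩
    · intro h h' hh hh' heq δ _ _ _ _
      simp only [Prod.mk.injEq] at heq
      change ReachGame.out ρ a b pun (G.st ρ a b _) _ = ReachGame.out ρ a b pun (G.st ρ a b _) _
      rw [G.st_append _ _ _ _ _ hh.1, G.st_append _ _ _ _ _ hh'.1, heq.1]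
      congr 1
      induction δ using List.reverseRecOn with
      | nil => simpa using heq.2
      | append_singleton δ w _ =>
        rw [← List.append_assoc, ← List.append_assoc, G.lastV_append, G.lastV_append]
  · intro j σ hσ
    rw [hπ]
    have hp' := G.isProfile_update τ hτ j σ hσ
    set τ' := Function.update τ j σ with hτ'
    have hmove : ∀ n, G.owner (G.outcome τ' n) ≠ j → G.outcome τ' (n + 1) =
        ReachGame.out ρ a b pun (G.st ρ a b (G.outHist τ' n)) (G.outcome τ' n) := by
      intro n ho
      rw [G.outcome_succ, hτ', Function.update_of_ne ho]
      rfl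
    have hinv : ∀ n, (G.st ρ a b (G.outHist τ' n) = Sum.inl ((ReachGame.nxt a b)^[n] 0) ∧
        G.outcome τ' n = π n) ∨ (G.st ρ a b (G.outHist τ' n) = Sum.inr j ∧
        ∀ m, G.Attr j m (G.outcome τ' n) → G.cost j π ≤ ((n + m : ℕ) : ℕ∞)) := by
      intro n
      induction n with
      | zero => exact Or.inl ⟨rfl, rfl⟩
      | succ n ih =>
        have hE := G.outcome_edge τ' hp' n
        rw [G.st_outHist_succ]
        rcases ih with ⟨hs, hx⟩ | ⟨hs, hx⟩
        · rw [hs]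
          by_cases heq : G.outcome τ' (n + 1) = π (n + 1)
          · left
            refine ⟨?_, heq⟩
            rw [heq]
            simp only [ReachGame.upd, π, Function.iterate_succ_apply', if_true]
          · right
            have ho : G.owner (G.outcome τ' n) = j := by
              by_contra ho
              apply heq
              rw [hmove n ho, hs]
              simp only [ReachGame.out, π, Function.iterate_succ_apply']
            constructor
            · have hne : ¬ G.outcome τ' (n + 1) =
                  ρ (ReachGame.nxt a b ((ReachGame.nxt a b)^[n] 0)) := by
                simpa only [π, Function.iterate_succ_apply'] using heq
              simp only [ReachGame.upd, if_neg hne]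
              rw [hx] at ho
              rw [← ho]
            · intro m hA
              have h1 : G.Attr j (m + 1) (π n) := by
                rw [← hx]
                exact Or.inr (Or.inl ⟨ho, _, hE, hA⟩)
              have := hgood j n (m + 1) h1
              rwa [show n + 1 + m = n + (m + 1) by omega]
        · right
          rw [hs]
          refine ⟨rfl, fun m hA => ?_⟩
          rw [show n + 1 + m = n + (m + 1) by omega]
          apply hx
          by_cases ho : G.owner (G.outcome τ' n) = j
          · exact Or.inr (Or.inl ⟨ho, _, hE, hA⟩)
          · rw [hmove n ho, hs] at hA
            exact hpun j _ ho m hA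
    refine G.le_cost j _ _ fun l hl => ?_
    rcases hinv l with ⟨_, hx⟩ | ⟨_, hx⟩
    · rw [hx] at hl
      exact G.cost_le j π l hl
    · exact hx 0 hl
  · ext j
    simp only [ReachGame.typeOf, Set.mem_setOf_eq, hπ]
    constructor
    · rintro ⟨l, hl⟩
      exact ⟨_, hl⟩
    · intro h
      obtain ⟨l, hl, hg, _⟩ := hN j h
      refine ⟨l, ?_⟩
      simp only [π]
      rw [ReachGame.idx_eq a b l (by omega)]
      exact hg
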